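/- Let ℓ, t, k, d, m be positive integers, let F be a finite field, and suppose that for some integer b > ℓ/k there is an F-linear code C ⊆ (F^b)^k with dim_F(C) ≥ ℓ and block distance at least dt+1. Then there is a t-private, k-server linear HSS for POLY_{d,m}(F)^ℓ in which each of the ℓm inputs is shared by t-private k-party CNF sharing (total upload cost k·ℓ·m·binom(k−1,t)·log₂|F| bits), each output share lies in F^b, and reconstruction is by a single F-linear map not depending on the evaluated functions; in particular the download rate is ℓ/(kb). -/

import Mathlib

/-!
Write the code as the row space of a generator matrix `G` and reconstruct by `y ↦ G y`. If `U` is a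
set of at most `dt` servers, the distance bound says that no nonzero codeword is supported on `U`,
so `G` keeps full row rank after the blocks in `U` are deleted; dually, every value of the
reconstruction map is attained on output vectors vanishing on `U`.

Substituting the sums of shares into a polynomial of degree at most `d` gives a polynomial of degree
at most `d` in the shares. Each of its monomials involves at most `d` shares, each of which is
missing at no more than `t` servers, so all but at most `dt` servers can evaluate it. The servers
answer with the value of the monomial times the blocks of a vector that vanishes on those `dt`
servers and is reconstructed to the basis vector of the message in question; reconstruction of the
sum over all monomials is then the vector of polynomial values.

Privacy: a coalition of size at most `t` is contained in a `t`-set, whose share no member sees.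
Shifting that share moves between the sharings of any two secrets without changing the view.
-/

open scoped BigOperators

/-- The index type for the `t`-element subsets of `[k]`. -/
abbrev TSubset (k t : ℕ) : Type := {S : Finset (Fin k) // S.card = t}

/-- `t`-privacy of `t`-private `k`-party CNF sharing: for any coalition `T` of at most `t`
parties, the joint view (the shares indexed by subsets missed by some member of `T`) has the
same distribution for any two secrets, the additive shares being uniform conditioned on
summing to the secret. -/
def CNFPrivate (F : Type) [Field F] [Fintype F] (k t : ℕ) : Prop :=
  ∀ T : Finset (Fin k), T.card ≤ t → ∀ x x' : F,
    ∀ v : {S : TSubset k t // ∃ j ∈ T, j ∉ S.1} → F,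
      Nat.card {xs : TSubset k t → F //
          (∑ S, xs S = x) ∧ ∀ S : {S : TSubset k t // ∃ j ∈ T, j ∉ S.1}, xs S.1 = v S} =
        Nat.card {xs : TSubset k t → F //
          (∑ S, xs S = x') ∧ ∀ S : {S : TSubset k t // ∃ j ∈ T, j ∉ S.1}, xs S.1 = v S}

open Finset MvPolynomial Matrix

section Sharing

theorem card_additiveSharing_eq_of_unseen {G P : Type*} [AddCommGroup G] [Fintype P]
    {seen : P → Prop} {S₀ : P} (hS₀ : ¬ seen S₀) (x x' : G) (v : {S // seen S} → G) :
    Nat.card {xs : P → G // ∑ S, xs S = x ∧ ∀ S : {S // seen S}, xs S.1 = v S} =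
      Nat.card {xs : P → G // ∑ S, xs S = x' ∧ ∀ S : {S // seen S}, xs S.1 = v S} := by
  classical
  let shift : P → G := Pi.single S₀ (x' - x)
  have hsum : ∑ S, shift S = x' - x := by simp [shift]
  have hview (S : {S // seen S}) : shift S.1 = 0 :=
    Pi.single_eq_of_ne (by rintro rfl; exact hS₀ S.2) _
  refine Nat.card_congr (Equiv.subtypeEquiv (Equiv.addRight shift) fun xs => ?_)
  simp only [Equiv.coe_addRight, Pi.add_apply, sum_add_distrib, hsum, hview, add_zero,
    ← eq_sub_iff_add_eq, sub_sub_cancel]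

theorem cnfPrivate_of_le (F : Type) [Field F] [Fintype F] {k t : ℕ} (htk : t ≤ k) :
    CNFPrivate F k t := by
  intro T hT x x' v
  obtain ⟨S₀, hTS₀, hS₀⟩ := exists_superset_card_eq hT (by simpa using htk)
  refine card_additiveSharing_eq_of_unseen (S₀ := ⟨S₀, hS₀⟩) ?_ x x' v
  rintro ⟨j, hjT, hjS₀⟩
  exact hjS₀ (hTS₀ hjT)

theorem card_tSubset_notMem (k t : ℕ) (j : Fin k) :
    Nat.card {S : TSubset k t // j ∉ S.1} = (k - 1).choose t := by
  have hmem (S : Finset (Fin k)) : S ∈ powersetCard t (univ.erase j) ↔ #S = t ∧ j ∉ S := by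
    simp [mem_powersetCard, subset_erase, and_comm]
  calc Nat.card {S : TSubset k t // j ∉ S.1}
      = Nat.card {S : Finset (Fin k) // #S = t ∧ j ∉ S} :=
        Nat.card_congr (Equiv.subtypeSubtypeEquivSubtypeInter (fun S => #S = t) (j ∉ ·))
    _ = #(powersetCard t (univ.erase j)) := Nat.subtype_card _ hmem
    _ = (k - 1).choose t := by simp

end Sharing

/-- `ErasureSurjective n g`: the linear map `g` on vectors of blocks stays surjective when any `n`
blocks are forced to be zero. This is the property of a reconstruction map that is dual to a code
having block distance greater than `n`. -/
def ErasureSurjective {R ι V W : Type*} [Semiring R] [AddCommMonoid V] [Module R V]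
    [AddCommMonoid W] [Module R W] (n : ℕ) (g : (ι → V) →ₗ[R] W) : Prop :=
  ∀ U : Finset ι, #U ≤ n → ∀ y, ∃ v, (∀ j ∈ U, v j = 0) ∧ g v = y

section Codes

variable {F ι κ β : Type*} [Field F] [Fintype ι]

theorem mulVec_surjective_of_vecMul_injective [Fintype κ] {G : Matrix κ ι F}
    (hG : Function.Injective G.vecMulLinear) : Function.Surjective G.mulVecLin := by
  have hrank : G.rank = Fintype.card κ := (vecMul_injective_iff.mp hG).rank_matrix
  refine LinearMap.range_eq_top.mp (Submodule.eq_top_of_finrank_eq ?_)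
  rw [Module.finrank_fintype_fun_eq_card, ← hrank, Matrix.rank]

theorem exists_mulVec_eq_of_vanishing [Fintype κ] {G : Matrix κ ι F} {s : Set ι}
    (hG : ∀ u, (∀ j ∉ s, (u ᵥ* G) j = 0) → u = 0) (y : κ → F) :
    ∃ v, (∀ j ∈ s, v j = 0) ∧ G *ᵥ v = y := by
  classical
  -- Deletes the columns in `s` while keeping the index type.
  let D : Matrix ι ι F := diagonal (sᶜ.indicator 1)
  have hinj : Function.Injective (G * D).vecMulLinear := by
    refine (injective_iff_map_eq_zero _).mpr fun u hu => hG u fun j hj => ?_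
    simpa [D, ← vecMul_vecMul, vecMul_diagonal, hj] using congrFun hu j
  obtain ⟨z, rfl⟩ := mulVec_surjective_of_vecMul_injective hinj y
  exact ⟨D *ᵥ z, fun j hj => by simp [D, mulVec_diagonal, hj], by simp⟩

theorem hammingNorm_le_card_of_vanishing {A : ι → Type*} [∀ i, DecidableEq (A i)]
    [∀ i, Zero (A i)] {U : Finset ι} {c : ∀ i, A i} (hc : ∀ j ∉ U, c j = 0) :
    hammingNorm c ≤ #U :=
  card_le_card fun j hj => by_contra fun hjU => (mem_filter.mp hj).2 (hc j hjU)

variable [DecidableEq (β → F)] {C : Submodule F (ι → β → F)} {ℓ n : ℕ}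

theorem lt_card_of_forall_lt_hammingNorm (hC : C ≠ ⊥)
    (hdist : ∀ c ∈ C, c ≠ 0 → n < hammingNorm c) : n < Fintype.card ι := by
  obtain ⟨c, hcC, hc⟩ := C.exists_mem_ne_zero_of_ne_bot hC
  exact (hdist c hcC hc).trans_le hammingNorm_le_card_fintype

theorem exists_erasureSurjective [Finite β] (hdim : ℓ ≤ Module.finrank F C)
    (hdist : ∀ c ∈ C, c ≠ 0 → n < hammingNorm c) :
    ∃ g : (ι → β → F) →ₗ[F] (Fin ℓ → F), ErasureSurjective n g := by
  have := Fintype.ofFinite β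
  obtain ⟨c, hc⟩ := exists_linearIndependent_of_le_finrank hdim
  let G : Matrix (Fin ℓ) (ι × β) F := fun i p => (c i).1 p.1 p.2
  have hG (u : Fin ℓ → F) (j : ι) (a : β) : (u ᵥ* G) (j, a) = (∑ i, u i • c i).1 j a := by
    simp [G, vecMul, dotProduct]
  refine ⟨G.mulVecLin ∘ₗ (LinearEquiv.curry F F ι β).symm, fun U hU y => ?_⟩
  have hinj : ∀ u, (∀ p ∉ {p : ι × β | p.1 ∈ U}, (u ᵥ* G) p = 0) → u = 0 := by
    intro u hu
    have hvanish : ∀ j ∉ U, (∑ i, u i • c i).1 j = 0 := fun j hj =>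
      funext fun a => (hG u j a).symm.trans (hu (j, a) hj)
    have hzero : ∑ i, u i • c i = 0 := by
      by_contra hne
      have hlt := hdist _ (∑ i, u i • c i).2 (Subtype.coe_ne_coe.mpr hne)
      exact (hlt.trans_le (hammingNorm_le_card_of_vanishing hvanish)).not_ge hU
    exact funext (Fintype.linearIndependent_iff.mp hc u hzero)
  obtain ⟨v, hv, hGv⟩ := exists_mulVec_eq_of_vanishing hinj y
  exact ⟨Function.curry v, fun j hj => funext fun a => hv (j, a) hj, hGv⟩

end Codes

section Polynomials

variable {R σ τ : Type*} [CommSemiring R]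

theorem totalDegree_bind₁_le {g : σ → MvPolynomial τ R} {n : ℕ}
    (hg : ∀ q, (g q).totalDegree ≤ n) (f : MvPolynomial σ R) :
    (bind₁ g f).totalDegree ≤ f.totalDegree * n := by
  rw [bind₁, aeval_def, eval₂_eq]
  refine totalDegree_finsetSum_le fun e he => ?_
  calc (C (f.coeff e) * ∏ q ∈ e.support, g q ^ e q).totalDegree
      ≤ (∏ q ∈ e.support, g q ^ e q).totalDegree := by
        simpa using totalDegree_mul (C (f.coeff e)) (∏ q ∈ e.support, g q ^ e q)
    _ ≤ ∑ q ∈ e.support, (g q ^ e q).totalDegree := totalDegree_finsetProd _ _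
    _ ≤ ∑ q ∈ e.support, e q * n := sum_le_sum fun q _ =>
        (totalDegree_pow _ _).trans (Nat.mul_le_mul_left _ (hg q))
    _ = (∑ q ∈ e.support, e q) * n := (sum_mul _ _ _).symm
    _ ≤ f.totalDegree * n := Nat.mul_le_mul_right _ (le_totalDegree he)

/-- The polynomial in the additive shares `X (q, S)` of the inputs `X q` of `f` obtained by
substituting `∑ S, X (q, S)` for `X q`. -/
noncomputable def sharePoly (P : Type*) [Fintype P] (f : MvPolynomial σ R) :
    MvPolynomial (σ × P) R :=
  bind₁ (fun q => ∑ S, X (q, S)) f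

theorem eval_sharePoly {P : Type*} [Fintype P] (f : MvPolynomial σ R) (a : σ × P → R) :
    eval a (sharePoly P f) = eval (fun q => ∑ S, a (q, S)) f := by
  simp only [← aeval_eq_eval, sharePoly, aeval_bind₁, map_sum, aeval_X]

theorem totalDegree_sharePoly_le (P : Type*) [Fintype P] (f : MvPolynomial σ R) :
    (sharePoly P f).totalDegree ≤ f.totalDegree := by
  have hX (q : σ) : (∑ S : P, X (q, S) : MvPolynomial (σ × P) R).totalDegree ≤ 1 :=
    totalDegree_finsetSum_le fun S _ => (totalDegree_monomial_le _ _).trans (by simp)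
  simpa [sharePoly] using totalDegree_bind₁_le hX f

variable {ι V W : Type*} [AddCommMonoid V] [Module R V] [AddCommMonoid W] [Module R W]

/-- The evaluation of `p` at `a` in which the value of each monomial `e` is multiplied by a vector
`w e` of weights; for `w` with values in `ι → V`, block `j` is what server `j` contributes. -/
noncomputable def weightedEval (w : (τ →₀ ℕ) → V) (p : MvPolynomial τ R) (a : τ → R) : V :=
  ∑ e ∈ p.support, (p.coeff e * ∏ i ∈ e.support, a i ^ e i) • w e

theorem weightedEval_apply (w : (τ →₀ ℕ) → ι → V) (p : MvPolynomial τ R) (a : τ → R) (j : ι) :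
    weightedEval w p a j = weightedEval (fun e => w e j) p a := by
  simp [weightedEval]

theorem weightedEval_congr {w : (τ →₀ ℕ) → V} {p : MvPolynomial τ R} {a a' : τ → R}
    (h : ∀ e ∈ p.support, w e = 0 ∨ ∀ i ∈ e.support, a i = a' i) :
    weightedEval w p a = weightedEval w p a' := by
  refine sum_congr rfl fun e he => ?_
  rcases h e he with hw | ha
  · simp only [hw, smul_zero]
  · rw [prod_congr rfl fun i hi => by rw [ha i hi]]

theorem map_weightedEval_eq_smul {w : (τ →₀ ℕ) → V} {p : MvPolynomial τ R} (g : V →ₗ[R] W) {y : W}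
    (h : ∀ e ∈ p.support, g (w e) = y) (a : τ → R) :
    g (weightedEval w p a) = eval a p • y := by
  rw [weightedEval, map_sum, eval_eq, sum_smul]
  exact sum_congr rfl fun e he => by rw [map_smul, h e he]

end Polynomials

section Reconstruction

variable {R ι κ σ τ P V W : Type*}

/-- The servers that cannot evaluate the monomial `e`, when server `j` is missing the value of the
variable `i` exactly if `j ∈ lacks i`. -/
def lackingServers [DecidableEq ι] (lacks : τ → Finset ι) (e : τ →₀ ℕ) : Finset ι :=
  e.support.biUnion lacks

theorem card_lackingServers_le [DecidableEq ι] {lacks : τ → Finset ι} {t : ℕ}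
    (hlacks : ∀ i, #(lacks i) ≤ t) (e : τ →₀ ℕ) : #(lackingServers lacks e) ≤ e.degree * t := by
  have hsupport : #e.support ≤ e.degree := by
    simpa [Finsupp.degree_apply] using card_nsmul_le_sum e.support e 1 fun i hi =>
      Nat.one_le_iff_ne_zero.mpr (Finsupp.mem_support_iff.mp hi)
  exact (card_biUnion_le_card_mul _ _ _ fun i _ => hlacks i).trans
    (Nat.mul_le_mul_right t hsupport)

variable [CommSemiring R] [AddCommMonoid V] [Module R V] [AddCommMonoid W] [Module R W]

theorem ErasureSurjective.exists_monomialWeights [DecidableEq ι] {d t : ℕ} {g : (ι → V) →ₗ[R] W}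
    (hg : ErasureSurjective (d * t) g) {lacks : τ → Finset ι} (hlacks : ∀ i, #(lacks i) ≤ t)
    (y : W) :
    ∃ w : (τ →₀ ℕ) → ι → V, ∀ e, e.degree ≤ d →
      (∀ j ∈ lackingServers lacks e, w e j = 0) ∧ g (w e) = y := by
  choose! w hw using fun (e : τ →₀ ℕ) (he : e.degree ≤ d) =>
    hg (lackingServers lacks e)
      ((card_lackingServers_le hlacks e).trans (Nat.mul_le_mul_right t he)) y
  exact ⟨w, hw⟩

/-- The contribution of server `j` to the evaluation of `f`, computed with monomial weights `w` from
the shares `y` it holds. Shares it does not hold are read as `0`. -/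
noncomputable def serverEval [Fintype P] (lacks : P → Finset ι) (w : (σ × P →₀ ℕ) → ι → V) (j : ι)
    (f : MvPolynomial σ R) (y : σ → {S // j ∉ lacks S} → R) : V :=
  weightedEval (fun e => w e j) (sharePoly P f) fun s => Function.extend Subtype.val (y s.1) 0 s.2

theorem serverEval_eq_weightedEval [Fintype P] [DecidableEq ι] {lacks : P → Finset ι}
    {w : (σ × P →₀ ℕ) → ι → V} {f : MvPolynomial σ R}
    (hw : ∀ e ∈ (sharePoly P f).support,
      ∀ j ∈ lackingServers (fun s : σ × P => lacks s.2) e, w e j = 0)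
    (xs : σ → P → R) (j : ι) :
    serverEval lacks w j f (fun q S => xs q S.1) =
      weightedEval w (sharePoly P f) (fun s => xs s.1 s.2) j := by
  rw [weightedEval_apply]
  refine weightedEval_congr fun e he => ?_
  by_cases hj : j ∈ lackingServers (fun s : σ × P => lacks s.2) e
  · exact .inl (hw e he j hj)
  · refine .inr fun s hs => ?_
    have hheld : j ∉ lacks s.2 := fun h => hj (mem_biUnion.mpr ⟨s, hs, h⟩)
    exact Subtype.val_injective.extend_apply _ _ (⟨s.2, hheld⟩ : {S // j ∉ lacks S})

theorem map_serverEval_eq_smul [Fintype P] [DecidableEq ι] {lacks : P → Finset ι} {d : ℕ}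
    {w : (σ × P →₀ ℕ) → ι → V} {g : (ι → V) →ₗ[R] W} {y : W}
    (hw : ∀ e, e.degree ≤ d →
      (∀ j ∈ lackingServers (fun s : σ × P => lacks s.2) e, w e j = 0) ∧ g (w e) = y)
    {f : MvPolynomial σ R} (hf : f.totalDegree ≤ d) (xs : σ → P → R) :
    g (fun j => serverEval lacks w j f fun q S => xs q S.1) =
      eval (fun q => ∑ S, xs q S) f • y := by
  have hdeg : ∀ e ∈ (sharePoly P f).support, e.degree ≤ d := fun e he =>
    (le_totalDegree he).trans ((totalDegree_sharePoly_le P f).trans hf)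
  rw [funext (serverEval_eq_weightedEval (fun e he => (hw e (hdeg e he)).1) xs),
    map_weightedEval_eq_smul g fun e he => (hw e (hdeg e he)).2, eval_sharePoly]

theorem ErasureSurjective.exists_eval [Fintype P] [Finite κ] {d t : ℕ}
    {g : (ι → V) →ₗ[R] (κ → R)} (hg : ErasureSurjective (d * t) g) {lacks : P → Finset ι}
    (hlacks : ∀ S, #(lacks S) ≤ t) :
    ∃ Eval : ∀ j, (κ → {f : MvPolynomial σ R // f.totalDegree ≤ d}) →
        (κ → σ → {S // j ∉ lacks S} → R) → V,
      ∀ (f : κ → {f : MvPolynomial σ R // f.totalDegree ≤ d}) (xs : κ → σ → P → R),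
        g (fun j => Eval j f fun i q S => xs i q S.1) =
          fun i => eval (fun q => ∑ S, xs i q S) (f i).1 := by
  classical
  have := Fintype.ofFinite κ
  choose w hw using fun i : κ =>
    hg.exists_monomialWeights (fun s : σ × P => hlacks s.2) (Pi.single i 1)
  refine ⟨fun j f y => ∑ i, serverEval lacks (w i) j (f i).1 (y i), fun f xs => ?_⟩
  calc g (fun j => ∑ i, serverEval lacks (w i) j (f i).1 fun q S => xs i q S.1)
      = ∑ i, g (fun j => serverEval lacks (w i) j (f i).1 fun q S => xs i q S.1) := by
        rw [← map_sum, ← sum_fn]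
    _ = ∑ i, eval (fun q => ∑ S, xs i q S) (f i).1 • Pi.single i 1 :=
        sum_congr rfl fun i _ => map_serverEval_eq_smul (hw i) (f i).2 (xs i)
    _ = fun i => eval (fun q => ∑ S, xs i q S) (f i).1 := (pi_eq_sum_univ' _).symm

end Reconstruction

/-- **Download rate of HSS-for-polynomials follows from the distance of linear codes.**
Given an `F`-linear code `C ⊆ (F^b)^k` with `dim_F C ≥ ℓ` and block distance at least
`d*t + 1`, there is a `t`-private `k`-server linear HSS for `POLY_{d,m}(F)^ℓ` in which each
of the `ℓ·m` inputs is shared by `t`-private `k`-party CNF sharing (which is `t`-private,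
and gives each server `(k-1).choose t` field elements per input, i.e. total upload cost
`k·ℓ·m·binom(k−1,t)·log₂|F|` bits), each output share lies in `F^b`, and reconstruction is
a single `F`-linear map not depending on the evaluated functions; in particular the
download rate is `ℓ/(kb)`.  Correctness is stated for every additive CNF sharing of each
input. -/
theorem cnf_hss_for_polynomials (F : Type) [Field F] [Fintype F]
    (ℓ t k d m b : ℕ) (hℓ : 0 < ℓ) (ht : 0 < t) (hk : 0 < k) (hd : 0 < d) (hm : 0 < m)
    (hb : ℓ < b * k)
    (C : Submodule F (Fin k → (Fin b → F)))
    (hdim : ℓ ≤ Module.finrank F C)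
    (hdist : ∀ c ∈ C, ∀ c' ∈ C, c ≠ c' → d * t + 1 ≤ Nat.card {j : Fin k // c j ≠ c' j}) :
    CNFPrivate F k t ∧
    (∀ j : Fin k, Nat.card {S : TSubset k t // j ∉ S.1} = (k - 1).choose t) ∧
    ∃ (Eval : ∀ j : Fin k,
        (Fin ℓ → {f : MvPolynomial (Fin m) F // f.totalDegree ≤ d}) →
        (Fin ℓ → Fin m → ({S : TSubset k t // j ∉ S.1} → F)) → (Fin b → F))
      (Rec : (Fin k → (Fin b → F)) →ₗ[F] (Fin ℓ → F)),
      ∀ (f : Fin ℓ → {f : MvPolynomial (Fin m) F // f.totalDegree ≤ d})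
        (x : Fin ℓ → Fin m → F)
        (xs : Fin ℓ → Fin m → TSubset k t → F),
        (∀ i q, ∑ S, xs i q S = x i q) →
        Rec (fun j => Eval j f (fun i q S => xs i q S.1)) =
          fun i => MvPolynomial.eval (x i) (f i).1 := by
  classical
  have hnorm : ∀ c ∈ C, c ≠ 0 → d * t < hammingNorm c := fun c hc hne => by
    simpa [Nat.card_eq_fintype_card, Fintype.card_subtype, hammingNorm] using
      hdist c hc 0 C.zero_mem hne
  have htk : t ≤ k := by
    have hC : C ≠ ⊥ := (Submodule.one_le_finrank_iff).mp (hℓ.trans_le hdim)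
    calc t ≤ d * t := Nat.le_mul_of_pos_left t hd
      _ ≤ k := by simpa using (lt_card_of_forall_lt_hammingNorm hC hnorm).le
  obtain ⟨Rec, hRec⟩ := exists_erasureSurjective hdim hnorm
  obtain ⟨Eval, hEval⟩ := hRec.exists_eval (lacks := Subtype.val) fun S : TSubset k t => S.2.le
  refine ⟨cnfPrivate_of_le F htk, card_tSubset_notMem k t, Eval, Rec, fun f x xs hx => ?_⟩
  simp only [hEval, hx]
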